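/- Let E, H : ℝ × ℝ³ → Matrix (Fin 3) (Fin 3) ℝ be smooth matrix-valued fields that are pointwise symmetric, trace-free, and spatially divergence-free (Σ_b ∂_b E_{ab} = 0 = Σ_b ∂_b H_{ab}), and suppose they satisfy the linearized Bianchi evolution system ∂ₜE_{ab} = (curl H)_{ab} and ∂ₜH_{ab} = −(curl E)_{ab}, with the tensor curl taken in the spatial variables. Then every component of E satisfies the wave equation ∂ₜ²E_{ab} = ΔE_{ab}, where Δ = Σ_c ∂_c². (This is the flat-space, non-expanding form □E_{ab} = 0 of the gravitational wave equation for the electric Weyl tensor.) -/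

import Mathlib

/-- Time partial derivative of a scalar field on `ℝ × ℝ³`. -/
noncomputable def pt (f : ℝ × (Fin 3 → ℝ) → ℝ) (p : ℝ × (Fin 3 → ℝ)) : ℝ :=
  deriv (fun s => f (s, p.2)) p.1

/-- Spatial partial derivative `∂_i` of a scalar field on `ℝ × ℝ³`. -/
noncomputable def ps (i : Fin 3) (f : ℝ × (Fin 3 → ℝ) → ℝ) (p : ℝ × (Fin 3 → ℝ)) : ℝ :=
  deriv (fun s => f (p.1, Function.update p.2 i s)) (p.2 i)

/-- Levi-Civita symbol on three indices. -/
noncomputable def eps (a b c : Fin 3) : ℝ :=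
  (((b : ℕ) : ℝ) - ((a : ℕ) : ℝ)) * (((c : ℕ) : ℝ) - ((b : ℕ) : ℝ))
    * (((c : ℕ) : ℝ) - ((a : ℕ) : ℝ)) / 2

/-- Symmetrized spatial tensor curl of a matrix-valued field on `ℝ × ℝ³`:
`(curl S)_{ab} = ½ Σ_{c,d} ( ε_{acd} ∂_c S_{db} + ε_{bcd} ∂_c S_{da} )`. -/
noncomputable def curlT (S : ℝ × (Fin 3 → ℝ) → Matrix (Fin 3) (Fin 3) ℝ)
    (p : ℝ × (Fin 3 → ℝ)) : Matrix (Fin 3) (Fin 3) ℝ :=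
  Matrix.of fun a b =>
    (1 / 2) * ∑ c, ∑ d,
      (eps a c d * ps c (fun q => S q d b) p + eps b c d * ps c (fun q => S q d a) p)

/-!
On symmetric, trace-free, divergence-free tensor fields the symmetrization in the tensor curl is
redundant: the antisymmetric part of the column-wise curl is the dual of the divergence minus the
gradient of the trace. This class of fields is preserved by the tensor curl, so that on it the
square of the tensor curl is the column-wise `curl curl = grad div - Δ = -Δ`. Hence
`∂ₜ²E = ∂ₜ curl H = curl ∂ₜH = -curl curl E = ΔE`.
-/

open scoped Topology

section LineDeriv

variable {𝕜 E F : Type*} [RCLike 𝕜] [NormedAddCommGroup E] [NormedSpace 𝕜 E]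
  [NormedAddCommGroup F] [NormedSpace 𝕜 F]

lemma lineDeriv_lineDeriv_comm {f : E → F} {x : E} (hf : ContDiffAt 𝕜 2 f x) (v w : E) :
    lineDeriv 𝕜 (fun y => lineDeriv 𝕜 f y v) x w =
      lineDeriv 𝕜 (fun y => lineDeriv 𝕜 f y w) x v := by
  have hdiff : ∀ᶠ y in 𝓝 x, DifferentiableAt 𝕜 f y :=
    (hf.eventually (by simp)).mono fun y hy => hy.differentiableAt two_ne_zero
  have hfderiv : DifferentiableAt 𝕜 (fderiv 𝕜 f) x :=
    (hf.fderiv_right (m := 1) one_add_one_eq_two.le).differentiableAt one_ne_zero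
  have hsnd (u u' : E) :
      lineDeriv 𝕜 (fun y => lineDeriv 𝕜 f y u) x u' = fderiv 𝕜 (fderiv 𝕜 f) x u' u := by
    have hfirst : (fun y => lineDeriv 𝕜 f y u) =ᶠ[𝓝 x] fun y => fderiv 𝕜 f y u :=
      hdiff.mono fun y hy => hy.lineDeriv_eq_fderiv
    rw [hfirst.lineDeriv_eq]
    simpa using ((hfderiv.hasFDerivAt.clm_apply
      (hasFDerivAt_const u x)).hasLineDerivAt u').lineDeriv
  rw [hsnd, hsnd]
  exact hf.isSymmSndFDerivAt (by simp) w v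

lemma contDiff_lineDeriv {f : E → F} {m n : WithTop ℕ∞} (hf : ContDiff 𝕜 n f) (hmn : m + 1 ≤ n)
    (v : E) : ContDiff 𝕜 m (fun y => lineDeriv 𝕜 f y v) := by
  have hn : n ≠ 0 := by
    rintro rfl
    simp at hmn
  have heq : (fun y => lineDeriv 𝕜 f y v) = fun y => fderiv 𝕜 f y v :=
    funext fun y => (hf.differentiable hn y).lineDeriv_eq_fderiv
  rw [heq]
  exact (hf.fderiv_right hmn).clm_apply contDiff_const

lemma lineDeriv_fun_add {f g : E → F} {x v : E} (hf : LineDifferentiableAt 𝕜 f x v)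
    (hg : LineDifferentiableAt 𝕜 g x v) :
    lineDeriv 𝕜 (fun y => f y + g y) x v = lineDeriv 𝕜 f x v + lineDeriv 𝕜 g x v :=
  deriv_fun_add hf hg

lemma lineDeriv_fun_sum {ι : Type*} {s : Finset ι} {f : ι → E → F} {x v : E}
    (hf : ∀ i ∈ s, LineDifferentiableAt 𝕜 (f i) x v) :
    lineDeriv 𝕜 (fun y => ∑ i ∈ s, f i y) x v = ∑ i ∈ s, lineDeriv 𝕜 (f i) x v :=
  deriv_fun_sum hf

lemma lineDeriv_const_mul (k : 𝕜) (f : E → 𝕜) (x v : E) :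
    lineDeriv 𝕜 (fun y => k * f y) x v = k * lineDeriv 𝕜 f x v :=
  deriv_const_mul_field k

end LineDeriv

section PartialDeriv

variable {f : ℝ × (Fin 3 → ℝ) → ℝ}

lemma pt_eq_lineDeriv (f : ℝ × (Fin 3 → ℝ) → ℝ) (p : ℝ × (Fin 3 → ℝ)) :
    pt f p = lineDeriv ℝ f p (1, 0) := by
  have hline (t : ℝ) : p + t • ((1 : ℝ), (0 : Fin 3 → ℝ)) = (p.1 + t, p.2) := by
    ext <;> simp
  simp only [lineDeriv, hline, pt]
  rw [deriv_comp_const_add (fun s => f (s, p.2)), add_zero]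

lemma ps_eq_lineDeriv (i : Fin 3) (f : ℝ × (Fin 3 → ℝ) → ℝ) (p : ℝ × (Fin 3 → ℝ)) :
    ps i f p = lineDeriv ℝ f p (0, Pi.single i 1) := by
  have hline (t : ℝ) : p + t • ((0 : ℝ), (Pi.single i 1 : Fin 3 → ℝ)) =
      (p.1, Function.update p.2 i (p.2 i + t)) := by
    ext j
    · simp
    · rcases eq_or_ne j i with rfl | hji <;> simp [*]
  simp only [lineDeriv, hline, ps]
  rw [deriv_comp_const_add (fun s => f (p.1, Function.update p.2 i s)), add_zero]

lemma differentiable_ps (hf : ContDiff ℝ 2 f) (i : Fin 3) : Differentiable ℝ (ps i f) := by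
  rw [funext (ps_eq_lineDeriv i f)]
  exact (contDiff_lineDeriv (m := 1) hf one_add_one_eq_two.le _).differentiable one_ne_zero

lemma lineDeriv_ps_comm (hf : ContDiff ℝ 2 f) (i : Fin 3) (p v : ℝ × (Fin 3 → ℝ)) :
    lineDeriv ℝ (ps i f) p v = ps i (fun q => lineDeriv ℝ f q v) p := by
  rw [funext (ps_eq_lineDeriv i f), ps_eq_lineDeriv]
  exact lineDeriv_lineDeriv_comm hf.contDiffAt _ _

lemma ps_fun_sum {ι : Type*} {s : Finset ι} {g : ι → ℝ × (Fin 3 → ℝ) → ℝ}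
    (hg : ∀ i ∈ s, Differentiable ℝ (g i)) (c : Fin 3) (p : ℝ × (Fin 3 → ℝ)) :
    ps c (fun q => ∑ i ∈ s, g i q) p = ∑ i ∈ s, ps c (g i) p := by
  simp only [ps_eq_lineDeriv]
  exact lineDeriv_fun_sum fun i hi => (hg i hi p).lineDifferentiableAt

lemma ps_fun_neg (c : Fin 3) (f : ℝ × (Fin 3 → ℝ) → ℝ) (p : ℝ × (Fin 3 → ℝ)) :
    ps c (fun q => -f q) p = -ps c f p :=
  deriv.fun_neg

lemma ps_zero (c : Fin 3) (p : ℝ × (Fin 3 → ℝ)) : ps c (fun _ => 0) p = 0 :=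
  deriv_const _ _

end PartialDeriv

section LeviCivita

lemma eps_rotate (a b c : Fin 3) : eps a b c = eps b c a := by
  unfold eps; ring

lemma sum_eps_mul_eps (a c e f : Fin 3) :
    ∑ d, eps a c d * eps d e f =
      (if a = e then 1 else 0) * (if c = f then 1 else 0)
        - (if a = f then 1 else 0) * (if c = e then 1 else 0) := by
  fin_cases a <;> fin_cases c <;> fin_cases e <;> fin_cases f <;>
    norm_num [eps, Fin.sum_univ_three]

lemma sum_eps_mul_sum_eps (T : Fin 3 → Fin 3 → Fin 3 → ℝ) (a : Fin 3) :
    ∑ c, ∑ d, eps a c d * ∑ e, ∑ f, eps d e f * T c e f = ∑ c, T c a c - ∑ c, T c c a := by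
  calc ∑ c, ∑ d, eps a c d * ∑ e, ∑ f, eps d e f * T c e f
      = ∑ c, ∑ e, ∑ f, (∑ d, eps a c d * eps d e f) * T c e f := by
        refine Finset.sum_congr rfl fun c _ => ?_
        simp only [Finset.mul_sum, Finset.sum_mul, mul_assoc]
        rw [Finset.sum_comm]
        exact Finset.sum_congr rfl fun e _ => Finset.sum_comm
    _ = ∑ c, T c a c - ∑ c, T c c a := by
        simp [sum_eps_mul_eps, sub_mul, Finset.sum_sub_distrib, ite_mul]

lemma sum_eps_mul_eq_zero_iff {M : Fin 3 → Fin 3 → ℝ} :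
    (∀ a, ∑ b, ∑ c, eps a b c * M b c = 0) ↔ ∀ b c, M b c = M c b := by
  have hcomp : (∀ a, ∑ b, ∑ c, eps a b c * M b c = 0) ↔
      M 1 2 = M 2 1 ∧ M 2 0 = M 0 2 ∧ M 0 1 = M 1 0 := by
    norm_num [Fin.forall_fin_succ, Fin.sum_univ_three, eps]
    grind
  rw [hcomp]
  refine ⟨fun hM b c => ?_, fun hM => ⟨hM 1 2, hM 2 0, hM 0 1⟩⟩
  fin_cases b <;> fin_cases c <;> simp [hM]

end LeviCivita

section Curl

variable {V : ℝ × (Fin 3 → ℝ) → Fin 3 → ℝ}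
  {S : ℝ × (Fin 3 → ℝ) → Matrix (Fin 3) (Fin 3) ℝ}

/-- The spatial curl `(curl V)_a = Σ_{c,d} ε_{acd} ∂_c V_d` of a time-dependent vector field. Matrix
fields are differentiated column by column through it. -/
noncomputable def curl (V : ℝ × (Fin 3 → ℝ) → Fin 3 → ℝ) (p : ℝ × (Fin 3 → ℝ)) (a : Fin 3) : ℝ :=
  ∑ c, ∑ d, eps a c d * ps c (fun q => V q d) p

lemma differentiable_curl (hV : ∀ d, ContDiff ℝ 2 (fun q => V q d)) (a : Fin 3) :
    Differentiable ℝ (fun q => curl V q a) :=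
  Differentiable.fun_sum fun c _ => Differentiable.fun_sum fun d _ =>
    (differentiable_ps (hV d) c).const_mul _

lemma lineDeriv_curl (hV : ∀ d, ContDiff ℝ 2 (fun q => V q d)) (p v : ℝ × (Fin 3 → ℝ))
    (a : Fin 3) :
    lineDeriv ℝ (fun q => curl V q a) p v =
      curl (fun q d => lineDeriv ℝ (fun r => V r d) q v) p a := by
  have hdiff (c d : Fin 3) :
      Differentiable ℝ (fun q => eps a c d * ps c (fun r => V r d) q) :=
    (differentiable_ps (hV d) c).const_mul _
  simp only [curl]
  rw [lineDeriv_fun_sum fun c _ =>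
    (Differentiable.fun_sum fun d _ => hdiff c d).differentiableAt.lineDifferentiableAt]
  refine Finset.sum_congr rfl fun c _ => ?_
  rw [lineDeriv_fun_sum fun d _ => (hdiff c d).differentiableAt.lineDifferentiableAt]
  refine Finset.sum_congr rfl fun d _ => ?_
  rw [lineDeriv_const_mul, lineDeriv_ps_comm (hV d)]

lemma pt_curl (hV : ∀ d, ContDiff ℝ 2 (fun q => V q d)) (p : ℝ × (Fin 3 → ℝ)) (a : Fin 3) :
    pt (fun q => curl V q a) p = curl (fun q d => pt (fun r => V r d) q) p a := by
  simp only [pt_eq_lineDeriv, lineDeriv_curl hV]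

lemma ps_curl (hV : ∀ d, ContDiff ℝ 2 (fun q => V q d)) (b : Fin 3) (p : ℝ × (Fin 3 → ℝ))
    (a : Fin 3) :
    ps b (fun q => curl V q a) p = curl (fun q d => ps b (fun r => V r d) q) p a := by
  simp only [ps_eq_lineDeriv b, lineDeriv_curl hV]

lemma curl_fun_sum {ι : Type*} {s : Finset ι} {W : ι → ℝ × (Fin 3 → ℝ) → Fin 3 → ℝ}
    (hW : ∀ i ∈ s, ∀ d, Differentiable ℝ (fun q => W i q d)) (p : ℝ × (Fin 3 → ℝ)) (a : Fin 3) :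
    curl (fun q d => ∑ i ∈ s, W i q d) p a = ∑ i ∈ s, curl (W i) p a := by
  simp only [curl, ps_fun_sum fun i hi => hW i hi _, Finset.mul_sum,
    Finset.sum_comm (s := Finset.univ) (t := s)]

lemma curl_neg (V : ℝ × (Fin 3 → ℝ) → Fin 3 → ℝ) (p : ℝ × (Fin 3 → ℝ)) (a : Fin 3) :
    curl (fun q d => -V q d) p a = -curl V p a := by
  simp only [curl, ps_fun_neg, mul_neg, Finset.sum_neg_distrib]

lemma curl_zero (p : ℝ × (Fin 3 → ℝ)) (a : Fin 3) : curl (fun _ _ => 0) p a = 0 := by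
  simp [curl, ps_zero]

lemma curl_curl (hV : ∀ d, ContDiff ℝ 2 (fun q => V q d)) (p : ℝ × (Fin 3 → ℝ)) (a : Fin 3) :
    curl (curl V) p a =
      ps a (fun q => ∑ b, ps b (fun r => V r b) q) p
        - ∑ c, ps c (ps c (fun q => V q a)) p := by
  calc curl (curl V) p a
      = ∑ c, ∑ d, eps a c d * ∑ e, ∑ f, eps d e f * ps e (ps c (fun q => V q f)) p := by
        rw [curl]
        simp only [ps_curl hV]
        rfl
    _ = ∑ c, ps a (ps c (fun q => V q c)) p - ∑ c, ps c (ps c (fun q => V q a)) p :=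
        sum_eps_mul_sum_eps (fun c e f => ps e (ps c (fun q => V q f)) p) a
    _ = _ := by rw [ps_fun_sum fun b _ => differentiable_ps (hV b) b]

lemma curlT_apply (S : ℝ × (Fin 3 → ℝ) → Matrix (Fin 3) (Fin 3) ℝ) (p : ℝ × (Fin 3 → ℝ))
    (a b : Fin 3) :
    curlT S p a b =
      (1 / 2) * (curl (fun q d => S q d b) p a + curl (fun q d => S q d a) p b) := by
  simp only [curlT, curl, Matrix.of_apply, Finset.sum_add_distrib]

lemma curlT_neg (S : ℝ × (Fin 3 → ℝ) → Matrix (Fin 3) (Fin 3) ℝ) (p : ℝ × (Fin 3 → ℝ)) :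
    curlT (fun q => -S q) p = -curlT S p := by
  ext a b
  rw [Matrix.neg_apply, curlT_apply, curlT_apply]
  simp only [Matrix.neg_apply, curl_neg]
  ring

lemma curlT_symm (S : ℝ × (Fin 3 → ℝ) → Matrix (Fin 3) (Fin 3) ℝ) (p : ℝ × (Fin 3 → ℝ))
    (a b : Fin 3) : curlT S p a b = curlT S p b a := by
  rw [curlT_apply, curlT_apply, add_comm]

lemma differentiable_curlT (hS : ∀ a b, ContDiff ℝ 2 (fun q => S q a b)) (a b : Fin 3) :
    Differentiable ℝ (fun q => curlT S q a b) := by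
  simp only [curlT_apply]
  exact ((differentiable_curl (fun d => hS d b) a).add
    (differentiable_curl (fun d => hS d a) b)).const_mul _

lemma pt_curlT (hS : ∀ a b, ContDiff ℝ 2 (fun q => S q a b)) (p : ℝ × (Fin 3 → ℝ))
    (a b : Fin 3) :
    pt (fun q => curlT S q a b) p =
      curlT (fun q => Matrix.of fun c d => pt (fun r => S r c d) q) p a b := by
  have hdiff (a b : Fin 3) :
      LineDifferentiableAt ℝ (fun q => curl (fun r d => S r d b) q a) p (1, 0) :=
    (differentiable_curl (fun d => hS d b) a p).lineDifferentiableAt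
  simp only [curlT_apply, Matrix.of_apply]
  rw [pt_eq_lineDeriv, lineDeriv_const_mul, lineDeriv_fun_add (hdiff a b) (hdiff b a),
    ← pt_eq_lineDeriv, ← pt_eq_lineDeriv, pt_curl fun d => hS d b, pt_curl fun d => hS d a]

lemma curl_col_comm {p : ℝ × (Fin 3 → ℝ)}
    (hgradtrace : ∀ k, ∑ b, ps k (fun q => S q b b) p = 0)
    (hdiv : ∀ k, ∑ b, ps b (fun q => S q k b) p = 0) (a b : Fin 3) :
    curl (fun q d => S q d b) p a = curl (fun q d => S q d a) p b := by
  refine sum_eps_mul_eq_zero_iff (M := fun f e => curl (fun q d => S q d f) p e).1 (fun k => ?_) b a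
  calc ∑ f, ∑ e, eps k f e * curl (fun q d => S q d f) p e
      = ∑ f, ps k (fun q => S q f f) p - ∑ f, ps f (fun q => S q k f) p :=
        sum_eps_mul_sum_eps (fun f c d => ps c (fun q => S q d f) p) k
    _ = 0 := by rw [hgradtrace, hdiv, sub_zero]

lemma sum_curl_col_eq_zero (hsymm : ∀ q a b, S q a b = S q b a) (p : ℝ × (Fin 3 → ℝ)) :
    ∑ a, curl (fun q d => S q d a) p a = 0 := by
  have hcontract (c : Fin 3) : ∑ d, ∑ a, eps a c d * ps c (fun q => S q d a) p = 0 := by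
    simp only [eps_rotate _ c]
    exact sum_eps_mul_eq_zero_iff.2
      (fun d a => congrArg (ps c · p) (funext fun q => hsymm q d a)) c
  calc ∑ a, curl (fun q d => S q d a) p a
      = ∑ c, ∑ d, ∑ a, eps a c d * ps c (fun q => S q d a) p := by
        simp only [curl]
        rw [Finset.sum_comm]
        exact Finset.sum_congr rfl fun c _ => Finset.sum_comm
    _ = 0 := Finset.sum_eq_zero fun c _ => hcontract c

end Curl

section TransverseTraceless

variable {S : ℝ × (Fin 3 → ℝ) → Matrix (Fin 3) (Fin 3) ℝ}

/-- The transverse-traceless tensor fields: symmetric, trace-free and spatially divergence-free at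
every time. These are the algebraic and constraint conditions on each part of a vacuum Weyl
tensor. -/
structure IsTransverseTraceless (S : ℝ × (Fin 3 → ℝ) → Matrix (Fin 3) (Fin 3) ℝ) : Prop where
  symm : ∀ p a b, S p a b = S p b a
  trace : ∀ p, ∑ a, S p a a = 0
  div : ∀ p a, ∑ b, ps b (fun q => S q a b) p = 0

lemma IsTransverseTraceless.curlT_eq_curl (hS : IsTransverseTraceless S)
    (hdiff : ∀ a b, Differentiable ℝ (fun q => S q a b)) (p : ℝ × (Fin 3 → ℝ)) (a b : Fin 3) :
    curlT S p a b = curl (fun q d => S q d b) p a := by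
  have hgradtrace (k : Fin 3) : ∑ b, ps k (fun q => S q b b) p = 0 := by
    rw [← ps_fun_sum fun b _ => hdiff b b]
    simp only [hS.trace, ps_zero]
  rw [curlT_apply, curl_col_comm hgradtrace (hS.div p) b a]
  ring

lemma isTransverseTraceless_curlT (hS : IsTransverseTraceless S)
    (hsmooth : ∀ a b, ContDiff ℝ 2 (fun q => S q a b)) :
    IsTransverseTraceless (curlT S) where
  symm := curlT_symm S
  trace p := by
    simp only [hS.curlT_eq_curl fun a b => (hsmooth a b).differentiable two_ne_zero,
      sum_curl_col_eq_zero hS.symm]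
  div p a := by
    simp only [hS.curlT_eq_curl fun a b => (hsmooth a b).differentiable two_ne_zero]
    calc ∑ b, ps b (fun q => curl (fun r d => S r d b) q a) p
        = ∑ b, curl (fun q d => ps b (fun r => S r d b) q) p a :=
          Finset.sum_congr rfl fun b _ => ps_curl (fun d => hsmooth d b) b p a
      _ = curl (fun q d => ∑ b, ps b (fun r => S r d b) q) p a :=
          (curl_fun_sum (fun b _ d => differentiable_ps (hsmooth d b) b) p a).symm
      _ = 0 := by simp only [hS.div, curl_zero]

lemma IsTransverseTraceless.curlT_curlT (hS : IsTransverseTraceless S)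
    (hsmooth : ∀ a b, ContDiff ℝ 2 (fun q => S q a b)) (p : ℝ × (Fin 3 → ℝ)) (a b : Fin 3) :
    curlT (curlT S) p a b = -∑ c, ps c (ps c (fun q => S q a b)) p := by
  have hdivcol (q : ℝ × (Fin 3 → ℝ)) : ∑ d, ps d (fun r => S r d b) q = 0 := by
    simp only [hS.symm _ _ b, hS.div]
  calc curlT (curlT S) p a b
      = curl (fun q d => curlT S q d b) p a :=
        (isTransverseTraceless_curlT hS hsmooth).curlT_eq_curl
          (differentiable_curlT hsmooth) p a b
    _ = curl (curl (fun q d => S q d b)) p a := by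
        simp only [hS.curlT_eq_curl fun a b => (hsmooth a b).differentiable two_ne_zero]
    _ = -∑ c, ps c (ps c (fun q => S q a b)) p := by
        rw [curl_curl fun d => hsmooth d b]
        simp only [hdivcol, ps_zero, zero_sub]

end TransverseTraceless

theorem electric_weyl_wave_equation_general
    {E H : ℝ × (Fin 3 → ℝ) → Matrix (Fin 3) (Fin 3) ℝ}
    (hEsmooth : ∀ a b, ContDiff ℝ 2 (fun p => E p a b))
    (hHsmooth : ∀ a b, ContDiff ℝ 2 (fun p => H p a b))
    (hE : IsTransverseTraceless E)
    (hdotE : ∀ p a b, pt (fun q => E q a b) p = curlT H p a b)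
    (hdotH : ∀ p a b, pt (fun q => H q a b) p = -curlT E p a b) (p : ℝ × (Fin 3 → ℝ))
    (a b : Fin 3) :
    pt (pt (fun q => E q a b)) p = ∑ c, ps c (ps c (fun q => E q a b)) p := by
  have hdotH_matrix :
      (fun q => Matrix.of fun c d => pt (fun r => H r c d) q) = fun q => -curlT E q :=
    funext fun q => Matrix.ext (hdotH q)
  calc pt (pt (fun q => E q a b)) p
      = pt (fun q => curlT H q a b) p := by rw [funext fun q => hdotE q a b]
    _ = curlT (fun q => -curlT E q) p a b := by rw [pt_curlT hHsmooth, hdotH_matrix]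
    _ = -curlT (curlT E) p a b := by rw [curlT_neg, Matrix.neg_apply]
    _ = ∑ c, ps c (ps c (fun q => E q a b)) p := by rw [hE.curlT_curlT hEsmooth, neg_neg]

/-- Linearized Bianchi system for the electric and magnetic Weyl tensors about flat
spacetime: if symmetric trace-free spatially divergence-free smooth `E, H` satisfy
`∂ₜE = curl H` and `∂ₜH = −curl E`, then each component of `E` satisfies the
unit-speed wave equation `∂ₜ²E_{ab} = ΔE_{ab}` (the flat-space form `□E_{ab} = 0`). -/
theorem electric_weyl_wave_equation
    (E H : ℝ × (Fin 3 → ℝ) → Matrix (Fin 3) (Fin 3) ℝ)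
    (hEsmooth : ∀ a b, ContDiff ℝ (⊤ : ℕ∞) (fun p => E p a b))
    (hHsmooth : ∀ a b, ContDiff ℝ (⊤ : ℕ∞) (fun p => H p a b))
    (hEsymm : ∀ p a b, E p a b = E p b a)
    (hHsymm : ∀ p a b, H p a b = H p b a)
    (hEtrace : ∀ p, (∑ a, E p a a) = 0)
    (hHtrace : ∀ p, (∑ a, H p a a) = 0)
    (hEdiv : ∀ p a, (∑ b, ps b (fun q => E q a b) p) = 0)
    (hHdiv : ∀ p a, (∑ b, ps b (fun q => H q a b) p) = 0)
    (hdotE : ∀ p a b, pt (fun q => E q a b) p = curlT H p a b)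
    (hdotH : ∀ p a b, pt (fun q => H q a b) p = - curlT E p a b) :
    ∀ p a b, pt (pt (fun q => E q a b)) p = ∑ c, ps c (ps c (fun q => E q a b)) p := by
  exact electric_weyl_wave_equation_general (fun a b => contDiff_infty.1 (hEsmooth a b) 2)
    (fun a b => contDiff_infty.1 (hHsmooth a b) 2) ⟨hEsymm, hEtrace, hEdiv⟩ hdotE hdotH
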